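/- arXiv:1012.3775 — 2 statements merged into one kernel-verified Lean document; each statement's English description precedes it below -/
import Mathlib

section
/- Let n ≥ 1, τ > 0, C > 0, R > 0. Let e : ℝⁿ → ℝ^{n×n} be a C² symmetric matrix field and ζ : ℝⁿ → ℝⁿ a C² vector field such that for all |x| ≥ R: ‖e(x)‖ ≤ C|x|^{−τ}, ‖De(x)‖ ≤ C|x|^{−τ−1}, ‖D²e(x)‖ ≤ C|x|^{−τ−2}, ‖ζ(x)‖ ≤ C|x|^{1−τ}, ‖ζ(x)‖ ≤ |x|/2, ‖Dζ(x)‖ ≤ C|x|^{−τ}, and ‖D²ζ(x)‖ ≤ C|x|^{−τ−1}. Set g = δ + e, Ψ = id + ζ, and R₁ = Ψ*g − g − L_ζδ (pullback taken componentwise). Then there exists a constant C′ > 0 such that ‖DR₁(x)‖ ≤ C′ |x|^{−2τ−1} for all |x| ≥ 2R. -/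
/-!
The remainder `R₁` is quadratically small, and the proof organises this with symbol classes:
`IsSymbol R p f` says that `f = O(r^p)` and `∂f = O(r^{p-1})` on `{r ≥ 2R}`. These classes are
closed under sums, multiply by adding exponents, and increase with `p` because `r` is bounded below.

Write `A_{ai} = ∂_i ζ_a` and `Ψ = id + ζ`. Expanding the pullback, the flat part of the metric
contributes `δ_{ij} + ∂_i ζ_j + ∂_j ζ_i + ∑_a A_{ai} A_{aj}`, so that
`R₁ = ∑_a A_{ai} A_{aj} + (e_{ij} ∘ Ψ - e_{ij})
  + ∑_{a,b} (e_{ab} ∘ Ψ) (δ_{ai} A_{bj} + A_{ai} δ_{bj} + A_{ai} A_{bj})`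
(`remainder_eq`). Here `A` and `e ∘ Ψ` are symbols of order `-τ`, so the first and last sums have
order `-2τ`. The middle difference also has order `-2τ`: the mean value inequality along the
segment from `x` to `x + ζ x`, which stays in `{r ≥ |x|/2}`, gains a factor `ζ = O(r^{1-τ})` over a
derivative of `e`; it is applied to `e` for the size and to `∂e` for the derivative
(`isBigO_shift_sub`, `isSymbol_shift_sub`). Hence `R₁` is a symbol of order `-2τ`.
-/

/-- The `i`-th partial derivative of a real-valued function on Euclidean space. -/
noncomputable def pd {n : ℕ} (i : Fin n) (f : EuclideanSpace ℝ (Fin n) → ℝ)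
    (x : EuclideanSpace ℝ (Fin n)) : ℝ :=
  fderiv ℝ f x (EuclideanSpace.single i 1)

/-- The pullback of a matrix-valued field `e` by `Ψ = id + ζ`:
`(Ψ*e)_{ij}(x) = ∑_{a,b} e_{ab}(x + ζ(x)) (δ_{ai} + ∂_i ζ_a(x)) (δ_{bj} + ∂_j ζ_b(x))`. -/
noncomputable def pullback {n : ℕ}
    (ζ : EuclideanSpace ℝ (Fin n) → EuclideanSpace ℝ (Fin n))
    (e : EuclideanSpace ℝ (Fin n) → Fin n → Fin n → ℝ)
    (x : EuclideanSpace ℝ (Fin n)) (i j : Fin n) : ℝ :=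
  ∑ a, ∑ b, e (x + ζ x) a b
    * ((if a = i then (1:ℝ) else 0) + pd i (fun y => ζ y a) x)
    * ((if b = j then (1:ℝ) else 0) + pd j (fun y => ζ y b) x)

/-- The Lie derivative of the flat metric along `ζ`: `(L_ζ δ)_{ij} = ∂_i ζ_j + ∂_j ζ_i`. -/
noncomputable def lieFlat {n : ℕ} (ζ : EuclideanSpace ℝ (Fin n) → EuclideanSpace ℝ (Fin n))
    (x : EuclideanSpace ℝ (Fin n)) (i j : Fin n) : ℝ :=
  pd i (fun y => ζ y j) x + pd j (fun y => ζ y i) x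

/-! ### Symbol classes -/

section Symbols

open Filter Asymptotics

variable {n : ℕ}

/-- The filter of the exterior region `{‖x‖ ≥ 2R}`. Being principal, it turns `=O` into a bound
valid on the whole region. -/
def farFilter (n : ℕ) (R : ℝ) : Filter (EuclideanSpace ℝ (Fin n)) :=
  𝓟 {x | 2 * R ≤ ‖x‖}

/-- Symbols of order `p` with one controlled derivative: differentiable functions which are
`O(r^p)` and whose partial derivatives are `O(r^{p-1})` on `{r ≥ 2R}`. -/
structure IsSymbol (R p : ℝ) (f : EuclideanSpace ℝ (Fin n) → ℝ) : Prop where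
  diff : Differentiable ℝ f
  bound : f =O[farFilter n R] fun x => ‖x‖ ^ p
  bound_pd : ∀ k, pd k f =O[farFilter n R] fun x => ‖x‖ ^ (p - 1)

lemma isBigO_far_of_le {R p K : ℝ} {f : EuclideanSpace ℝ (Fin n) → ℝ}
    (h : ∀ x : EuclideanSpace ℝ (Fin n), 2 * R ≤ ‖x‖ → |f x| ≤ K * ‖x‖ ^ p) :
    f =O[farFilter n R] fun x => ‖x‖ ^ p := by
  refine IsBigO.of_bound K (eventually_principal.2 fun x hx => ?_)
  rw [Real.norm_eq_abs, Real.norm_of_nonneg (Real.rpow_nonneg (norm_nonneg _) _)]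
  exact h x hx

lemma isBigO_far_iff {R p : ℝ} {f : EuclideanSpace ℝ (Fin n) → ℝ} :
    (f =O[farFilter n R] fun x => ‖x‖ ^ p) ↔
      ∃ K : ℝ, ∀ x : EuclideanSpace ℝ (Fin n), 2 * R ≤ ‖x‖ → |f x| ≤ K * ‖x‖ ^ p := by
  refine ⟨fun h => ?_, fun ⟨K, h⟩ => isBigO_far_of_le h⟩
  obtain ⟨K, hK⟩ := h.bound
  refine ⟨K, fun x hx => ?_⟩
  have := eventually_principal.1 hK x hx
  rwa [Real.norm_eq_abs, Real.norm_of_nonneg (Real.rpow_nonneg (norm_nonneg _) _)] at this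

lemma isBigO_far_mul {R p q : ℝ} (hR : 0 < R) {f g : EuclideanSpace ℝ (Fin n) → ℝ}
    (hf : f =O[farFilter n R] fun x => ‖x‖ ^ p) (hg : g =O[farFilter n R] fun x => ‖x‖ ^ q) :
    (fun x => f x * g x) =O[farFilter n R] fun x => ‖x‖ ^ (p + q) := by
  refine (hf.mul hg).congr' EventuallyEq.rfl (eventually_principal.2 fun x hx => ?_)
  have hx' : 2 * R ≤ ‖x‖ := hx
  exact (Real.rpow_add (by linarith) p q).symm

lemma isBigO_far_mono {R p q : ℝ} (hR : 0 < R) (hpq : p ≤ q) {f : EuclideanSpace ℝ (Fin n) → ℝ}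
    (hf : f =O[farFilter n R] fun x => ‖x‖ ^ p) :
    f =O[farFilter n R] fun x => ‖x‖ ^ q := by
  refine hf.trans (isBigO_far_of_le (K := (2 * R) ^ (p - q)) fun x hx => ?_)
  have hx0 : 0 < ‖x‖ := by linarith
  rw [abs_of_nonneg (Real.rpow_nonneg hx0.le _)]
  calc ‖x‖ ^ p = ‖x‖ ^ (p - q) * ‖x‖ ^ q := by rw [← Real.rpow_add hx0]; ring_nf
    _ ≤ _ := by
      gcongr ?_ * _
      exact Real.rpow_le_rpow_of_nonpos (by positivity) hx (by linarith)

lemma pd_add {f g : EuclideanSpace ℝ (Fin n) → ℝ} (hf : Differentiable ℝ f)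
    (hg : Differentiable ℝ g) (k : Fin n) :
    pd k (fun x => f x + g x) = fun x => pd k f x + pd k g x := by
  ext x
  simp [pd, fderiv_fun_add (hf x) (hg x)]

lemma pd_mul {f g : EuclideanSpace ℝ (Fin n) → ℝ} (hf : Differentiable ℝ f)
    (hg : Differentiable ℝ g) (k : Fin n) :
    pd k (fun x => f x * g x) = fun x => f x * pd k g x + pd k f x * g x := by
  ext x
  simp [pd, fderiv_fun_mul (hf x) (hg x), mul_comm]

namespace IsSymbol

lemma add {R p : ℝ} {f g : EuclideanSpace ℝ (Fin n) → ℝ}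
    (hf : IsSymbol R p f) (hg : IsSymbol R p g) :
    IsSymbol R p (fun x => f x + g x) where
  diff := hf.diff.add hg.diff
  bound := hf.bound.add hg.bound
  bound_pd k := by
    rw [pd_add hf.diff hg.diff]
    exact (hf.bound_pd k).add (hg.bound_pd k)

lemma mul {R p q : ℝ} (hR : 0 < R) {f g : EuclideanSpace ℝ (Fin n) → ℝ}
    (hf : IsSymbol R p f) (hg : IsSymbol R q g) :
    IsSymbol R (p + q) (fun x => f x * g x) where
  diff := hf.diff.mul hg.diff
  bound := isBigO_far_mul hR hf.bound hg.bound
  bound_pd k := by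
    rw [pd_mul hf.diff hg.diff]
    refine IsBigO.add ?_ ?_
    · exact (add_sub_assoc p q 1) ▸ isBigO_far_mul hR hf.bound (hg.bound_pd k)
    · have := isBigO_far_mul hR (hf.bound_pd k) hg.bound
      rwa [show p - 1 + q = p + q - 1 by ring] at this

lemma mono {R p q : ℝ} (hR : 0 < R) (hpq : p ≤ q) {f : EuclideanSpace ℝ (Fin n) → ℝ}
    (hf : IsSymbol R p f) :
    IsSymbol R q f where
  diff := hf.diff
  bound := isBigO_far_mono hR hpq hf.bound
  bound_pd k := isBigO_far_mono hR (by linarith) (hf.bound_pd k)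

lemma const (R c : ℝ) : IsSymbol R 0 (fun _ : EuclideanSpace ℝ (Fin n) => c) where
  diff := differentiable_const c
  bound := isBigO_far_of_le (K := |c|) fun x _ => by simp
  bound_pd k := isBigO_far_of_le (K := 0) fun x _ => by simp [pd]

lemma const_mul {R p : ℝ} (hR : 0 < R) (c : ℝ) {f : EuclideanSpace ℝ (Fin n) → ℝ}
    (hf : IsSymbol R p f) :
    IsSymbol R p (fun x => c * f x) := by
  simpa using (const (n := n) R c).mul hR hf

lemma sum {R p : ℝ} {ι : Type*} (s : Finset ι) {f : ι → EuclideanSpace ℝ (Fin n) → ℝ}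
    (hf : ∀ a, IsSymbol R p (f a)) : IsSymbol R p (fun x => ∑ a ∈ s, f a x) := by
  classical
  induction s using Finset.induction_on with
  | empty =>
    simp only [Finset.sum_empty]
    exact ⟨differentiable_const 0, isBigO_far_of_le (K := 0) (by simp),
      fun k => isBigO_far_of_le (K := 0) (by simp [pd])⟩
  | insert a s ha ih => simpa [Finset.sum_insert ha] using (hf a).add ih

end IsSymbol

/-! ### Linear functionals and partial derivatives -/

/-- A linear functional on Euclidean space is determined by its values on the standard basis. -/
lemma clm_apply_eq_sum (L : EuclideanSpace ℝ (Fin n) →L[ℝ] ℝ) (v : EuclideanSpace ℝ (Fin n)) :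
    L v = ∑ l, v l * L (EuclideanSpace.single l 1) := by
  conv_lhs => rw [← (EuclideanSpace.basisFun (Fin n) ℝ).sum_repr v]
  simp

lemma norm_clm_le_sum (L : EuclideanSpace ℝ (Fin n) →L[ℝ] ℝ) :
    ‖L‖ ≤ ∑ l, |L (EuclideanSpace.single l 1)| := by
  refine L.opNorm_le_bound (Finset.sum_nonneg fun _ _ => abs_nonneg _) fun v => ?_
  rw [clm_apply_eq_sum L v, Finset.sum_mul]
  refine (norm_sum_le _ _).trans (Finset.sum_le_sum fun l _ => ?_)
  rw [norm_mul, mul_comm, Real.norm_eq_abs (L _)]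
  gcongr
  exact PiLp.norm_apply_le v l

lemma differentiable_pd {f : EuclideanSpace ℝ (Fin n) → ℝ} (hf : ContDiff ℝ 2 f) (k : Fin n) :
    Differentiable ℝ (pd k f) := by
  have h : Differentiable ℝ (fderiv ℝ f) :=
    (hf.fderiv_right (m := 1) (by norm_num)).differentiable (by norm_num)
  exact fun x => (h x).clm_apply (differentiableAt_const _)

/-! ### Composition with `id + ζ` -/

/-- Decay of order `q ≤ 0` survives moving the base point by at most half its norm. -/
lemma rpow_le_of_half_le {q : ℝ} (hq : q ≤ 0) {x z : EuclideanSpace ℝ (Fin n)}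
    (hx : 0 < ‖x‖) (h : ‖x‖ / 2 ≤ ‖z‖) :
    ‖z‖ ^ q ≤ (1 / 2) ^ q * ‖x‖ ^ q := by
  rw [← Real.mul_rpow (by norm_num) hx.le]
  exact Real.rpow_le_rpow_of_nonpos (by positivity) (by linarith) hq

lemma half_le_norm_add {x v : EuclideanSpace ℝ (Fin n)} (h : ‖v‖ ≤ ‖x‖ / 2) :
    ‖x‖ / 2 ≤ ‖x + v‖ := by
  have := norm_sub_norm_le x (-v)
  rw [norm_neg, sub_neg_eq_add] at this
  linarith

section Shift

variable {R C q : ℝ} {ζ : EuclideanSpace ℝ (Fin n) → EuclideanSpace ℝ (Fin n)}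
  {f : EuclideanSpace ℝ (Fin n) → ℝ}

lemma isBigO_shift (hR : 0 < R) (hC : 0 < C) (hq : q ≤ 0)
    (hhalf : ∀ x : EuclideanSpace ℝ (Fin n), R ≤ ‖x‖ → ‖ζ x‖ ≤ ‖x‖ / 2)
    (hf : ∀ x : EuclideanSpace ℝ (Fin n), R ≤ ‖x‖ → |f x| ≤ C * ‖x‖ ^ q) :
    (fun x => f (x + ζ x)) =O[farFilter n R] fun x => ‖x‖ ^ q := by
  refine isBigO_far_of_le (K := C * (1 / 2) ^ q) fun x hx => ?_
  have h := half_le_norm_add (hhalf x (by linarith))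
  refine (hf _ (by linarith)).trans ?_
  rw [mul_assoc]
  gcongr
  exact rpow_le_of_half_le hq (by linarith) h

/-- Mean value inequality along `[x, x + ζ x]`: the difference decays like `∂f` times `ζ`. -/
lemma isBigO_shift_sub {τ : ℝ} (hR : 0 < R) (hC : 0 < C) (hq : q ≤ 0)
    (hζ : ∀ x : EuclideanSpace ℝ (Fin n), R ≤ ‖x‖ → ‖ζ x‖ ≤ C * ‖x‖ ^ (1 - τ))
    (hhalf : ∀ x : EuclideanSpace ℝ (Fin n), R ≤ ‖x‖ → ‖ζ x‖ ≤ ‖x‖ / 2)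
    (hd : Differentiable ℝ f)
    (hf : ∀ x : EuclideanSpace ℝ (Fin n), R ≤ ‖x‖ → ∀ l, |pd l f x| ≤ C * ‖x‖ ^ q) :
    (fun x => f (x + ζ x) - f x) =O[farFilter n R] fun x => ‖x‖ ^ (q + (1 - τ)) := by
  refine isBigO_far_of_le (K := (n * (C * (1 / 2) ^ q)) * C) fun x hx => ?_
  have hx0 : 0 < ‖x‖ := by linarith
  have hfd : ∀ z ∈ segment ℝ x (x + ζ x),
      ‖fderiv ℝ f z‖ ≤ n * (C * (1 / 2) ^ q) * ‖x‖ ^ q := by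
    intro z hz
    obtain ⟨t, ⟨ht0, ht1⟩, rfl⟩ := (segment_eq_image' ℝ x (x + ζ x) ▸ hz :)
    have hz : ‖x‖ / 2 ≤ ‖x + t • (x + ζ x - x)‖ := by
      refine half_le_norm_add ?_
      rw [add_sub_cancel_left, norm_smul, Real.norm_of_nonneg ht0]
      exact (mul_le_of_le_one_left (norm_nonneg _) ht1).trans (hhalf x (by linarith))
    calc _ ≤ ∑ l, |pd l f (x + t • (x + ζ x - x))| := norm_clm_le_sum _
      _ ≤ ∑ _l : Fin n, C * ((1 / 2) ^ q * ‖x‖ ^ q) := by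
        refine Finset.sum_le_sum fun l _ => (hf _ (by linarith) l).trans ?_
        gcongr
        exact rpow_le_of_half_le hq hx0 hz
      _ = _ := by simp; ring
  have hmv := (convex_segment x (x + ζ x)).norm_image_sub_le_of_norm_fderiv_le
    (fun z _ => hd z) hfd (left_mem_segment ℝ _ _) (right_mem_segment ℝ _ _)
  rw [add_sub_cancel_left, Real.norm_eq_abs] at hmv
  refine hmv.trans ?_
  calc _ ≤ n * (C * (1 / 2) ^ q) * ‖x‖ ^ q * (C * ‖x‖ ^ (1 - τ)) := by
        gcongr
        exact hζ x (by linarith)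
    _ = _ := by rw [Real.rpow_add hx0]; ring

lemma pd_component (hζ : Differentiable ℝ ζ) (k l : Fin n) (x : EuclideanSpace ℝ (Fin n)) :
    pd k (fun y => ζ y l) x = (fderiv ℝ ζ x (EuclideanSpace.single k 1)) l := by
  have := ((EuclideanSpace.proj (𝕜 := ℝ) l).hasFDerivAt (x := ζ x)).comp x (hζ x).hasFDerivAt
  exact congrArg (· (EuclideanSpace.single k 1)) this.fderiv

/-- Chain rule for `f ∘ (id + ζ)`. -/
lemma pd_shift (hd : Differentiable ℝ f) (hζ : Differentiable ℝ ζ) (k : Fin n) :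
    pd k (fun x => f (x + ζ x)) = fun x =>
      pd k f (x + ζ x) + ∑ l, pd k (fun y => ζ y l) x * pd l f (x + ζ x) := by
  ext x
  have h1 : HasFDerivAt (fun x => x + ζ x) (ContinuousLinearMap.id ℝ _ + fderiv ℝ ζ x) x :=
    (hasFDerivAt_id x).add (hζ x).hasFDerivAt
  have h2 := (hd (x + ζ x)).hasFDerivAt.comp x h1
  simp only [pd_component hζ]
  have h4 : pd k (fun x => f (x + ζ x)) x = _ :=
    congrArg (· (EuclideanSpace.single k 1)) h2.fderiv
  rw [h4]
  simp only [ContinuousLinearMap.comp_apply, add_apply, map_add]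
  rw [clm_apply_eq_sum (fderiv ℝ f (x + ζ x)) (fderiv ℝ ζ x _)]
  rfl

end Shift

/-- The first derivatives of the displacement are symbols of order `-τ`. -/
lemma isSymbol_pd_displacement {R C τ : ℝ} (hR : 0 < R)
    {ζ : EuclideanSpace ℝ (Fin n) → EuclideanSpace ℝ (Fin n)} (hζ : ContDiff ℝ 2 ζ)
    (hD : ∀ x : EuclideanSpace ℝ (Fin n), R ≤ ‖x‖ → ‖fderiv ℝ ζ x‖ ≤ C * ‖x‖ ^ (-τ))
    (hD2 : ∀ x : EuclideanSpace ℝ (Fin n), R ≤ ‖x‖ → ∀ a k l,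
      |pd l (pd k (fun y => ζ y a)) x| ≤ C * ‖x‖ ^ (-τ - 1)) (a k : Fin n) :
    IsSymbol R (-τ) (pd k (fun y => ζ y a)) where
  diff := differentiable_pd ((EuclideanSpace.proj (𝕜 := ℝ) a).contDiff.comp hζ) k
  bound := isBigO_far_of_le (K := C) fun x hx => by
    rw [pd_component (hζ.differentiable (by norm_num))]
    refine (PiLp.norm_apply_le (fderiv ℝ ζ x (EuclideanSpace.single k 1)) a).trans
      (le_trans ?_ (hD x (by linarith)))
    simpa using (fderiv ℝ ζ x).le_opNorm (EuclideanSpace.single k (1 : ℝ))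
  bound_pd l := isBigO_far_of_le (K := C) fun x hx => hD2 x (by linarith) a k l

section Field

variable {R C τ : ℝ} {ζ : EuclideanSpace ℝ (Fin n) → EuclideanSpace ℝ (Fin n)}
  {f : EuclideanSpace ℝ (Fin n) → ℝ}

/-- The correction term in the chain rule for `f ∘ (id + ζ)` decays like `Dζ · ∂f`. -/
lemma isBigO_chain_correction (hR : 0 < R) (hC : 0 < C) (hτ : 0 < τ)
    (hA : ∀ a k : Fin n, IsSymbol R (-τ) (pd k (fun y => ζ y a)))
    (hhalf : ∀ x : EuclideanSpace ℝ (Fin n), R ≤ ‖x‖ → ‖ζ x‖ ≤ ‖x‖ / 2)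
    (hDf : ∀ x : EuclideanSpace ℝ (Fin n), R ≤ ‖x‖ → ∀ l, |pd l f x| ≤ C * ‖x‖ ^ (-τ - 1))
    (k : Fin n) :
    (fun x => ∑ l, pd k (fun y => ζ y l) x * pd l f (x + ζ x)) =O[farFilter n R]
      fun x => ‖x‖ ^ (-τ + -τ - 1) := by
  refine IsBigO.fun_sum fun l _ => ?_
  rw [add_sub_assoc]
  exact isBigO_far_mul hR (hA l k).bound
    (isBigO_shift hR hC (by linarith) hhalf fun x hx => hDf x hx l)

/-- Composition with `id + ζ` preserves symbols of order `-τ`. -/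
lemma isSymbol_shift (hR : 0 < R) (hC : 0 < C) (hτ : 0 < τ) (hζ : Differentiable ℝ ζ)
    (hA : ∀ a k : Fin n, IsSymbol R (-τ) (pd k (fun y => ζ y a)))
    (hhalf : ∀ x : EuclideanSpace ℝ (Fin n), R ≤ ‖x‖ → ‖ζ x‖ ≤ ‖x‖ / 2) (hd : Differentiable ℝ f)
    (hf : ∀ x : EuclideanSpace ℝ (Fin n), R ≤ ‖x‖ → |f x| ≤ C * ‖x‖ ^ (-τ))
    (hDf : ∀ x : EuclideanSpace ℝ (Fin n), R ≤ ‖x‖ → ∀ l, |pd l f x| ≤ C * ‖x‖ ^ (-τ - 1)) :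
    IsSymbol R (-τ) (fun x => f (x + ζ x)) where
  diff := hd.comp (differentiable_id.add hζ)
  bound := isBigO_shift hR hC (by linarith) hhalf hf
  bound_pd k := by
    rw [pd_shift hd hζ]
    exact (isBigO_shift hR hC (by linarith) hhalf fun x hx => hDf x hx k).add
      (isBigO_far_mono hR (by linarith) (isBigO_chain_correction hR hC hτ hA hhalf hDf k))

/-- The increment `f ∘ (id + ζ) - f` gains a factor `r^{-τ}`, including for its derivative. -/
lemma isSymbol_shift_sub (hR : 0 < R) (hC : 0 < C) (hτ : 0 < τ) (hζ : Differentiable ℝ ζ)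
    (hA : ∀ a k : Fin n, IsSymbol R (-τ) (pd k (fun y => ζ y a)))
    (hbζ : ∀ x : EuclideanSpace ℝ (Fin n), R ≤ ‖x‖ → ‖ζ x‖ ≤ C * ‖x‖ ^ (1 - τ))
    (hhalf : ∀ x : EuclideanSpace ℝ (Fin n), R ≤ ‖x‖ → ‖ζ x‖ ≤ ‖x‖ / 2) (hf : ContDiff ℝ 2 f)
    (hDf : ∀ x : EuclideanSpace ℝ (Fin n), R ≤ ‖x‖ → ∀ l, |pd l f x| ≤ C * ‖x‖ ^ (-τ - 1))
    (hD2f : ∀ x : EuclideanSpace ℝ (Fin n), R ≤ ‖x‖ → ∀ k l,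
      |pd l (pd k f) x| ≤ C * ‖x‖ ^ (-τ - 2)) :
    IsSymbol R (-τ + -τ) (fun x => f (x + ζ x) - f x) := by
  have hd : Differentiable ℝ f := hf.differentiable (by norm_num)
  have hdΨ : Differentiable ℝ (fun x => f (x + ζ x)) := hd.comp (differentiable_id.add hζ)
  refine ⟨hdΨ.sub hd, ?_, fun k => ?_⟩
  · have := isBigO_shift_sub hR hC (by linarith) hbζ hhalf hd hDf
    rwa [show -τ - 1 + (1 - τ) = -τ + -τ by ring] at this
  · have h1 := isBigO_shift_sub hR hC (by linarith) hbζ hhalf (differentiable_pd hf k)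
      fun x hx l => hD2f x hx k l
    rw [show -τ - 2 + (1 - τ) = -τ + -τ - 1 by ring] at h1
    refine (h1.add (isBigO_chain_correction hR hC hτ hA hhalf hDf k)).congr_left fun x => ?_
    have h2 : pd k (fun x => f (x + ζ x) - f x) x = pd k (fun x => f (x + ζ x)) x - pd k f x := by
      simp [pd, fderiv_fun_sub (hdΨ x) (hd x)]
    rw [h2, pd_shift hd hζ]
    ring

end Field

/-! ### The algebraic form of the remainder -/

/-- The terms of `Ψ*(δ + e) - (δ + e) - L_ζ δ` that remain after the linear ones cancel. -/
lemma remainder_eq (ζ : EuclideanSpace ℝ (Fin n) → EuclideanSpace ℝ (Fin n))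
    (e : EuclideanSpace ℝ (Fin n) → Fin n → Fin n → ℝ)
    (y : EuclideanSpace ℝ (Fin n)) (i j : Fin n) :
    pullback ζ (fun z a b => (if a = b then (1:ℝ) else 0) + e z a b) y i j
        - ((if i = j then (1:ℝ) else 0) + e y i j) - lieFlat ζ y i j
      = (∑ a, pd i (fun z => ζ z a) y * pd j (fun z => ζ z a) y)
        + (e (y + ζ y) i j - e y i j)
        + ∑ a, ∑ b, e (y + ζ y) a b
          * ((if a = i then (1:ℝ) else 0) * pd j (fun z => ζ z b) y
            + (if b = j then (1:ℝ) else 0) * pd i (fun z => ζ z a) y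
            + pd i (fun z => ζ z a) y * pd j (fun z => ζ z b) y) := by
  unfold pullback lieFlat
  generalize hA : (fun a k => pd k (fun z => ζ z a) y) = A
  have hA' : ∀ a k, pd k (fun z => ζ z a) y = A a k := fun a k => by rw [← hA]
  simp only [hA']
  generalize e (y + ζ y) = E
  -- Diagonal parts are isolated as nested conditionals, so that `simp` can collapse their sums.
  have key : ∀ a b, ((if a = b then (1:ℝ) else 0) + E a b)
      * ((if a = i then (1:ℝ) else 0) + A a i) * ((if b = j then (1:ℝ) else 0) + A b j)
      = (if a = b then (if a = i then (if b = j then (1:ℝ) else 0) else 0) else 0)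
        + (if a = b then (if a = i then A b j else 0) else 0)
        + (if a = b then (if b = j then A a i else 0) else 0)
        + (if a = b then A a i * A b j else 0)
        + (if a = i then (if b = j then E a b else 0) else 0)
        + E a b * ((if a = i then (1:ℝ) else 0) * A b j
          + (if b = j then (1:ℝ) else 0) * A a i + A a i * A b j) := by
    intro a b
    split_ifs <;> ring
  simp only [key, Finset.sum_add_distrib]
  simp
  ring

end Symbols

/-- under the decay assumptions `e = O(r^{−τ})`, `De = O(r^{−τ−1})`,
`D²e = O(r^{−τ−2})`, `ζ = O(r^{1−τ})`, `‖ζ‖ ≤ r/2`, `Dζ = O(r^{−τ})`, `D²ζ = O(r^{−τ−1})`,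
the first derivatives of the remainder `R₁ = Ψ*g − g − L_ζδ` (with `g = δ + e`,
`Ψ = id + ζ`) decay like `r^{−2τ−1}`: `‖DR₁(x)‖ ≤ C′ |x|^{−2τ−1}` for `|x| ≥ 2R`. -/
theorem remainder_R1_derivative_decay
    (n : ℕ) (hn : 1 ≤ n) (τ C R : ℝ) (hτ : 0 < τ) (hC : 0 < C) (hR : 0 < R)
    (e : EuclideanSpace ℝ (Fin n) → Fin n → Fin n → ℝ)
    (he : ∀ i j, ContDiff ℝ 2 (fun x => e x i j))
    (hesymm : ∀ x i j, e x i j = e x j i)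
    (ζ : EuclideanSpace ℝ (Fin n) → EuclideanSpace ℝ (Fin n))
    (hζ : ContDiff ℝ 2 ζ)
    (hbe : ∀ x : EuclideanSpace ℝ (Fin n), R ≤ ‖x‖ →
      ∀ i j, |e x i j| ≤ C * ‖x‖ ^ (-τ))
    (hbDe : ∀ x : EuclideanSpace ℝ (Fin n), R ≤ ‖x‖ →
      ∀ i j k, |pd k (fun y => e y i j) x| ≤ C * ‖x‖ ^ (-τ - 1))
    (hbD2e : ∀ x : EuclideanSpace ℝ (Fin n), R ≤ ‖x‖ →
      ∀ i j k l, |pd l (pd k (fun y => e y i j)) x| ≤ C * ‖x‖ ^ (-τ - 2))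
    (hbζ : ∀ x : EuclideanSpace ℝ (Fin n), R ≤ ‖x‖ → ‖ζ x‖ ≤ C * ‖x‖ ^ (1 - τ))
    (hbζhalf : ∀ x : EuclideanSpace ℝ (Fin n), R ≤ ‖x‖ → ‖ζ x‖ ≤ ‖x‖ / 2)
    (hbDζ : ∀ x : EuclideanSpace ℝ (Fin n), R ≤ ‖x‖ → ‖fderiv ℝ ζ x‖ ≤ C * ‖x‖ ^ (-τ))
    (hbD2ζ : ∀ x : EuclideanSpace ℝ (Fin n), R ≤ ‖x‖ →
      ∀ a k l, |pd l (pd k (fun y => ζ y a)) x| ≤ C * ‖x‖ ^ (-τ - 1)) :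
    ∃ C' : ℝ, 0 < C' ∧ ∀ x : EuclideanSpace ℝ (Fin n), 2 * R ≤ ‖x‖ → ∀ i j k,
      |pd k (fun y =>
          pullback ζ (fun z a b => (if a = b then (1:ℝ) else 0) + e z a b) y i j
            - ((if i = j then (1:ℝ) else 0) + e y i j) - lieFlat ζ y i j) x|
      ≤ C' * ‖x‖ ^ (-(2 * τ) - 1) := by
  have hA := isSymbol_pd_displacement hR hζ hbDζ hbD2ζ
  have hζd : Differentiable ℝ ζ := hζ.differentiable (by norm_num)
  have hE : ∀ a b, IsSymbol R (-τ) (fun y => e (y + ζ y) a b) := fun a b =>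
    isSymbol_shift hR hC hτ hζd hA hbζhalf ((he a b).differentiable (by norm_num))
      (fun x hx => hbe x hx a b) (fun x hx l => hbDe x hx a b l)
  have hR1 : ∀ i j, IsSymbol R (-τ + -τ) (fun y =>
      pullback ζ (fun z a b => (if a = b then (1:ℝ) else 0) + e z a b) y i j
        - ((if i = j then (1:ℝ) else 0) + e y i j) - lieFlat ζ y i j) := by
    intro i j
    simp only [remainder_eq]
    refine ((IsSymbol.sum _ fun a => (hA a i).mul hR (hA a j)).add
      (isSymbol_shift_sub hR hC hτ hζd hA hbζ hbζhalf (he i j)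
        (fun x hx l => hbDe x hx i j l) fun x hx k l => hbD2e x hx i j k l)).add
      (IsSymbol.sum _ fun a => IsSymbol.sum _ fun b => (hE a b).mul hR ?_)
    exact (((hA b j).const_mul hR _).add ((hA a i).const_mul hR _)).add
      (((hA a i).mul hR (hA b j)).mono hR (by linarith))
  have hbd := fun i j k => isBigO_far_iff.1 ((hR1 i j).bound_pd k)
  choose K hK using hbd
  -- One constant for the finitely many index triples.
  refine ⟨1 + ∑ i, ∑ j, ∑ k, |K i j k|, by positivity, fun x hx i j k => ?_⟩
  refine (hK i j k x hx).trans ?_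
  rw [show -τ + -τ - 1 = -(2 * τ) - 1 by ring]
  gcongr
  have h1 : |K i j k| ≤ ∑ k, |K i j k| :=
    Finset.single_le_sum (f := fun k => |K i j k|) (fun _ _ => by positivity) (Finset.mem_univ k)
  have h2 : ∑ k, |K i j k| ≤ ∑ j, ∑ k, |K i j k| :=
    Finset.single_le_sum (f := fun j => ∑ k, |K i j k|) (fun _ _ => by positivity)
      (Finset.mem_univ j)
  have h3 : ∑ j, ∑ k, |K i j k| ≤ ∑ i, ∑ j, ∑ k, |K i j k| :=
    Finset.single_le_sum (f := fun i => ∑ j, ∑ k, |K i j k|) (fun _ _ => by positivity)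
      (Finset.mem_univ i)
  linarith [le_abs_self (K i j k)]
end

section
/- Let n ≥ 1. Let f : ℝⁿ → ℝ and α : ℝⁿ → ℝⁿ be C² fields, and let ġ, k̇ : ℝⁿ → ℝ^{n×n} be C² symmetric matrix fields. Define 𝕌_j = f(∑_i ∂_i ġ_{ij} − ∂_j ∑_i ġ_{ii}) − ∑_i (∂_i f) ġ_{ij} + (∑_i ġ_{ii}) ∂_j f + 2(∑_i α_i k̇_{ij} − (∑_i k̇_{ii}) α_j). Then at every point of ℝⁿ: f·(∑_{i,j} ∂_i ∂_j ġ_{ij} − ∑_k ∂_k ∂_k ∑_i ġ_{ii}) + 2 ∑_j α_j (∑_i ∂_i k̇_{ij} − ∂_j ∑_i k̇_{ii}) = ∑_j ∂_j 𝕌_j + ∑_{i,j} (∂_i ∂_j f − (∑_k ∂_k ∂_k f) δ_{ij}) ġ_{ij} + ∑_{i,j} (2(∑_k ∂_k α_k) δ_{ij} − ∂_i α_j − ∂_j α_i) k̇_{ij}. -/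
section Calculus

variable {n : ℕ} {u v : EuclideanSpace ℝ (Fin n) → ℝ} {x : EuclideanSpace ℝ (Fin n)}

theorem pd_add_s13 (j : Fin n) (hu : DifferentiableAt ℝ u x) (hv : DifferentiableAt ℝ v x) :
    pd j (fun y => u y + v y) x = pd j u x + pd j v x := by
  simp [pd, fderiv_fun_add hu hv]

theorem pd_sub (j : Fin n) (hu : DifferentiableAt ℝ u x) (hv : DifferentiableAt ℝ v x) :
    pd j (fun y => u y - v y) x = pd j u x - pd j v x := by
  simp [pd, fderiv_fun_sub hu hv]

theorem pd_mul_s13 (j : Fin n) (hu : DifferentiableAt ℝ u x) (hv : DifferentiableAt ℝ v x) :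
    pd j (fun y => u y * v y) x = pd j u x * v x + u x * pd j v x := by
  simp [pd, fderiv_fun_mul hu hv]
  ring

theorem pd_const_mul (j : Fin n) (c : ℝ) (hu : DifferentiableAt ℝ u x) :
    pd j (fun y => c * u y) x = c * pd j u x := by
  simp [pd, fderiv_const_mul hu]

theorem pd_sum (j : Fin n) {w : Fin n → EuclideanSpace ℝ (Fin n) → ℝ}
    (hw : ∀ i, DifferentiableAt ℝ (w i) x) :
    pd j (fun y => ∑ i, w i y) x = ∑ i, pd j (w i) x := by
  simp [pd, fderiv_fun_sum (fun i _ => hw i)]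

theorem differentiable_pd_s13 (j : Fin n) (hu : ContDiff ℝ 2 u) : Differentiable ℝ (pd j u) := by
  have h : ContDiff ℝ 1 (fderiv ℝ u) := hu.fderiv_right (by norm_num)
  exact (h.differentiable (by norm_num)).clm_apply (differentiable_const _)

end Calculus

/-- The identity between finite sums left after differentiating `𝕌`. The letters stand for values
at one point: `F, Df, Hf` for `f, ∂_i f, ∂_i ∂_j f`; `a, Da i j` for `α_i, ∂_i α_j`; `G` for
`g_ij`, `DG l i j` for `∂_l g_ij`, `HG l m i j` for `∂_l ∂_m g_ij`; `DT, LT` for the first and the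
pure second derivatives of `tr g`; `k, Dk` for `k_ij, ∂_l k_ij` and `DK` for `∂_j (tr k)`. -/
theorem sum_identity {n : ℕ} (F : ℝ) (Df : Fin n → ℝ) (Hf : Fin n → Fin n → ℝ)
    (a : Fin n → ℝ) (Da : Fin n → Fin n → ℝ) (G : Fin n → Fin n → ℝ)
    (DG : Fin n → Fin n → Fin n → ℝ) (HG : Fin n → Fin n → Fin n → Fin n → ℝ)
    (DT LT : Fin n → ℝ) (k : Fin n → Fin n → ℝ) (Dk : Fin n → Fin n → Fin n → ℝ)
    (DK : Fin n → ℝ) (hG : ∀ i j, G i j = G j i) (hDG : ∀ l i j, DG l i j = DG l j i)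
    (hHG : ∀ l m i j, HG l m i j = HG l m j i) (hk : ∀ i j, k i j = k j i)
    (hDk : ∀ l i j, Dk l i j = Dk l j i) :
    F * ((∑ i, ∑ j, HG i j i j) - ∑ l, LT l)
      + 2 * ∑ j, a j * ((∑ i, Dk i i j) - DK j)
    = (∑ j, (Df j * ((∑ i, DG i i j) - DT j) + F * ((∑ i, HG j i i j) - LT j)
          - (∑ i, (Hf j i * G i j + Df i * DG j i j))
          + (DT j * Df j + (∑ i, G i i) * Hf j j)
          + 2 * ((∑ i, (Da j i * k i j + a i * Dk j i j))
            - (DK j * a j + (∑ i, k i i) * Da j j))))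
      + (∑ i, ∑ j, (Hf i j - (∑ l, Hf l l) * (if i = j then (1:ℝ) else 0)) * G i j)
      + ∑ i, ∑ j, (2 * (∑ l, Da l l) * (if i = j then (1:ℝ) else 0)
          - Da i j - Da j i) * k i j := by
  have hH : ∑ j, ∑ i, HG j i i j = ∑ i, ∑ j, HG i j i j :=
    Finset.sum_congr rfl fun j _ => Finset.sum_congr rfl fun i _ => hHG _ _ _ _
  have hD : ∑ j, ∑ i, Df i * DG j i j = ∑ j, ∑ i, Df j * DG i i j := by
    rw [Finset.sum_comm]
    exact Finset.sum_congr rfl fun i _ => Finset.sum_congr rfl fun j _ => by rw [hDG]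
  have hHf : ∑ j, ∑ i, Hf j i * G i j = ∑ i, ∑ j, Hf i j * G i j :=
    Finset.sum_congr rfl fun j _ => Finset.sum_congr rfl fun i _ => by rw [hG]
  have ha : ∑ j, ∑ i, a i * Dk j i j = ∑ j, ∑ i, a j * Dk i i j := by
    rw [Finset.sum_comm]
    exact Finset.sum_congr rfl fun i _ => Finset.sum_congr rfl fun j _ => by rw [hDk]
  have hDa : ∑ j, ∑ i, Da j i * k i j = ∑ i, ∑ j, Da i j * k i j :=
    Finset.sum_congr rfl fun j _ => Finset.sum_congr rfl fun i _ => by rw [hk]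
  have hDa' : ∑ i, ∑ j, Da j i * k i j = ∑ i, ∑ j, Da i j * k i j := by
    rw [Finset.sum_comm, hDa]
  have hδ : ∀ (c : ℝ) (M : Fin n → Fin n → ℝ),
      ∑ i, ∑ j, c * (if i = j then (1:ℝ) else 0) * M i j = c * ∑ i, M i i := by
    intro c M
    simp [Finset.mul_sum]
  simp only [sub_mul, mul_sub, mul_add, Finset.sum_add_distrib, Finset.sum_sub_distrib, hδ,
    ← Finset.mul_sum, hH, hHf, ha, hDa, hDa']
  simp only [Finset.mul_sum] at hD ha ⊢
  simp only [← Finset.mul_sum] at hD ha ⊢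
  simp only [mul_comm (DT _), mul_comm (DK _)]
  linarith [hD]

/-- flat-background (`g₀ = δ`, `k₀ = 0`) integration-by-parts identity for the
linearized constraint operator of General Relativity: the pairing of the test pair `(f, α)`
with the linearized constraints applied to `(gdot, kdot)` equals the divergence of the
charge integrand `𝕌` plus the pairings with the formal adjoints applied to `(f, α)`. -/
theorem constraints_integration_by_parts_flat
    (n : ℕ) (hn : 1 ≤ n)
    (f : EuclideanSpace ℝ (Fin n) → ℝ) (hf : ContDiff ℝ 2 f)
    (α : EuclideanSpace ℝ (Fin n) → EuclideanSpace ℝ (Fin n)) (hα : ContDiff ℝ 2 α)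
    (gdot kdot : EuclideanSpace ℝ (Fin n) → Fin n → Fin n → ℝ)
    (hgdot : ∀ i j, ContDiff ℝ 2 (fun x => gdot x i j))
    (hkdot : ∀ i j, ContDiff ℝ 2 (fun x => kdot x i j))
    (hgsymm : ∀ x i j, gdot x i j = gdot x j i)
    (hksymm : ∀ x i j, kdot x i j = kdot x j i)
    (U : Fin n → EuclideanSpace ℝ (Fin n) → ℝ)
    (hU : ∀ j x, U j x =
      f x * ((∑ i, pd i (fun y => gdot y i j) x) - pd j (fun y => ∑ i, gdot y i i) x)
        - (∑ i, pd i f x * gdot x i j) + (∑ i, gdot x i i) * pd j f x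
        + 2 * ((∑ i, α x i * kdot x i j) - (∑ i, kdot x i i) * α x j))
    (x : EuclideanSpace ℝ (Fin n)) :
    f x * ((∑ i, ∑ j, pd i (pd j (fun y => gdot y i j)) x)
        - ∑ k, pd k (pd k (fun y => ∑ i, gdot y i i)) x)
      + 2 * ∑ j, α x j * ((∑ i, pd i (fun y => kdot y i j) x)
          - pd j (fun y => ∑ i, kdot y i i) x)
    = (∑ j, pd j (U j) x)
      + (∑ i, ∑ j, (pd i (pd j f) x
          - (∑ k, pd k (pd k f) x) * (if i = j then (1:ℝ) else 0)) * gdot x i j)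
      + ∑ i, ∑ j, (2 * (∑ k, pd k (fun y => α y k) x) * (if i = j then (1:ℝ) else 0)
          - pd i (fun y => α y j) x - pd j (fun y => α y i) x) * kdot x i j := by
  have df : Differentiable ℝ f := hf.differentiable (by norm_num)
  have dα : ∀ i, Differentiable ℝ (fun y => α y i) := fun i =>
    (contDiff_euclidean.1 hα i).differentiable (by norm_num)
  have dg : ∀ i j, Differentiable ℝ (fun y => gdot y i j) := fun i j =>
    (hgdot i j).differentiable (by norm_num)
  have dk : ∀ i j, Differentiable ℝ (fun y => kdot y i j) := fun i j =>
    (hkdot i j).differentiable (by norm_num)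
  have cT : ContDiff ℝ 2 (fun y => ∑ i, gdot y i i) := ContDiff.sum fun i _ => hgdot i i
  have dT : Differentiable ℝ (fun y => ∑ i, gdot y i i) := cT.differentiable (by norm_num)
  have dK : Differentiable ℝ (fun y => ∑ i, kdot y i i) :=
    Differentiable.fun_sum fun i _ => dk i i
  have dpf : ∀ j, Differentiable ℝ (pd j f) := fun j => differentiable_pd_s13 j hf
  have dpg : ∀ l i j, Differentiable ℝ (pd l (fun y => gdot y i j)) := fun l i j =>
    differentiable_pd_s13 l (hgdot i j)
  have dpT : ∀ j, Differentiable ℝ (pd j (fun y => ∑ i, gdot y i i)) := fun j =>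
    differentiable_pd_s13 j cT
  have key : ∀ j, pd j (U j) x =
      pd j f x * ((∑ i, pd i (fun y => gdot y i j) x) - pd j (fun y => ∑ i, gdot y i i) x)
        + f x * ((∑ i, pd j (pd i (fun y => gdot y i j)) x)
          - pd j (pd j (fun y => ∑ i, gdot y i i)) x)
        - (∑ i, (pd j (pd i f) x * gdot x i j + pd i f x * pd j (fun y => gdot y i j) x))
        + (pd j (fun y => ∑ i, gdot y i i) x * pd j f x
          + (∑ i, gdot x i i) * pd j (pd j f) x)
        + 2 * ((∑ i, (pd j (fun y => α y i) x * kdot x i j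
            + α x i * pd j (fun y => kdot y i j) x))
          - (pd j (fun y => ∑ i, kdot y i i) x * α x j
            + (∑ i, kdot x i i) * pd j (fun y => α y j) x)) := by
    intro j
    have d1 : Differentiable ℝ (fun y => ∑ i, pd i (fun y => gdot y i j) y) :=
      Differentiable.fun_sum fun i _ => dpg i i j
    have d2 : Differentiable ℝ (fun y => (∑ i, pd i (fun y => gdot y i j) y)
        - pd j (fun y => ∑ i, gdot y i i) y) := d1.fun_sub (dpT j)
    have d3 := df.fun_mul d2
    have d4 : ∀ i, Differentiable ℝ (fun y => pd i f y * gdot y i j) := fun i =>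
      (dpf i).fun_mul (dg i j)
    have d5 : Differentiable ℝ (fun y => ∑ i, pd i f y * gdot y i j) :=
      Differentiable.fun_sum fun i _ => d4 i
    have d6 := dT.fun_mul (dpf j)
    have d7 : ∀ i, Differentiable ℝ (fun y => α y i * kdot y i j) := fun i =>
      (dα i).fun_mul (dk i j)
    have d8 : Differentiable ℝ (fun y => ∑ i, α y i * kdot y i j) :=
      Differentiable.fun_sum fun i _ => d7 i
    have d9 := dK.fun_mul (dα j)
    have d10 := d8.fun_sub d9
    rw [funext (hU j),
      pd_add_s13 j (((d3.fun_sub d5).fun_add d6) x) ((d10.const_mul 2) x),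
      pd_add_s13 j ((d3.fun_sub d5) x) (d6 x), pd_sub j (d3 x) (d5 x), pd_mul_s13 j (df x) (d2 x),
      pd_sub j (d1 x) (dpT j x), pd_sum j (fun i => dpg i i j x), pd_sum j (fun i => d4 i x),
      pd_mul_s13 j (dT x) (dpf j x), pd_const_mul j 2 (d10 x), pd_sub j (d8 x) (d9 x),
      pd_sum j (fun i => d7 i x), pd_mul_s13 j (dK x) (dα j x)]
    simp only [fun i => pd_mul_s13 j (dpf i x) (dg i j x), fun i => pd_mul_s13 j (dα i x) (dk i j x)]
  have sg : ∀ i j, (fun y => gdot y i j) = fun y => gdot y j i := fun i j =>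
    funext fun y => hgsymm y i j
  have sk : ∀ i j, (fun y => kdot y i j) = fun y => kdot y j i := fun i j =>
    funext fun y => hksymm y i j
  simp only [key]
  exact sum_identity (f x) (fun i => pd i f x) (fun i j => pd i (pd j f) x) (fun i => α x i)
    (fun i j => pd i (fun y => α y j) x) (gdot x) (fun l i j => pd l (fun y => gdot y i j) x)
    (fun l m i j => pd l (pd m (fun y => gdot y i j)) x)
    (fun j => pd j (fun y => ∑ i, gdot y i i) x)
    (fun j => pd j (pd j (fun y => ∑ i, gdot y i i)) x) (kdot x)
    (fun l i j => pd l (fun y => kdot y i j) x) (fun j => pd j (fun y => ∑ i, kdot y i i) x)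
    (hgsymm x) (fun l i j => by rw [sg i j]) (fun l m i j => by rw [sg i j])
    (hksymm x) (fun l i j => by rw [sk i j])
end
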